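/- Let f(t) = Σ_k f_k G_k^{(n)}(t) with all f_k ≥ 0 and let P ⊂ S^{n−1}, |P| = m, be an f-design (so f(⟨p_i,p_j⟩)=0 for i≠j and M_k(P)=0 whenever k≥1 and f_k≠0). Then for every m-subset Y = {y_1,…,y_m} ⊂ S^{n−1}, Σ_{i<j} (−f(⟨y_i,y_j⟩)) ≤ 0 = Σ_{i<j} (−f(⟨p_i,p_j⟩)); hence P is an M-set for ρ(x,y) = −f(⟨x,y⟩). -/

import Mathlib

open scoped RealInnerProductSpace

/-- Gegenbauer polynomials for dimension `n`, normalized so that `Geg n k 1 = 1`. -/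
noncomputable def Geg (n : ℕ) : ℕ → ℝ → ℝ
  | 0 => fun _ => 1
  | 1 => fun t => t
  | (k + 2) => fun t =>
      ((2 * ((k : ℝ) + 2) + (n : ℝ) - 4) * t * Geg n (k + 1) t -
          (((k : ℝ) + 2) - 1) * Geg n k t) / (((k : ℝ) + 2) + (n : ℝ) - 3)

/-- The sum of the k smallest elements of a multiset of reals. -/
noncomputable def kSmallestSum (M : Multiset ℝ) (k : ℕ) : ℝ := ((M.sort (· ≤ ·)).take k).sum

/-- Weak majorization of multisets. -/
def WeakMaj (A B : Multiset ℝ) : Prop := ∀ k : ℕ, kSmallestSum B k ≤ kSmallestSum A k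

/-- The multiset of pairwise ρ-values of an m-point configuration. -/
def pairMultiset {S : Type*} {m : ℕ} (ρ : S → S → ℝ) (X : Fin m → S) : Multiset ℝ :=
  ((Finset.univ.filter (fun q : Fin m × Fin m => q.1 < q.2)).val).map
    (fun q => ρ (X q.1) (X q.2))


open MvPolynomial in
/-- Fischer pairing. -/
noncomputable def fis (n : ℕ) :
    MvPolynomial (Fin n) ℝ →ₗ[ℝ] MvPolynomial (Fin n) ℝ →ₗ[ℝ] ℝ :=
  (basisMonomials (Fin n) ℝ).constr ℝ
    (fun a => ((∏ i, (a i).factorial : ℕ) : ℝ) • lcoeff ℝ a)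

open MvPolynomial in
lemma fis_monomial {n : ℕ} (a : Fin n →₀ ℕ) (Q : MvPolynomial (Fin n) ℝ) :
    fis n (monomial a 1) Q = ((∏ i, (a i).factorial : ℕ) : ℝ) * coeff a Q := by
  have h := (basisMonomials (Fin n) ℝ).constr_basis ℝ
    (fun a => ((∏ i, (a i).factorial : ℕ) : ℝ) • lcoeff ℝ a) a
  rw [coe_basisMonomials] at h
  unfold fis
  rw [h]
  simp [lcoeff]

open MvPolynomial in
lemma fis_eq {n : ℕ} (P Q : MvPolynomial (Fin n) ℝ) :
    fis n P Q = ∑ a ∈ P.support,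
      ((∏ i, (a i).factorial : ℕ) : ℝ) * (coeff a P * coeff a Q) := by
  conv_lhs => rw [P.as_sum]
  rw [map_sum, LinearMap.sum_apply]
  refine Finset.sum_congr rfl fun a _ => ?_
  have : monomial a (coeff a P) = (coeff a P) • monomial a (1 : ℝ) := by
    rw [smul_monomial]; simp
  rw [this, map_smul, LinearMap.smul_apply, fis_monomial, smul_eq_mul]
  ring

lemma fis_self_nonneg {n : ℕ} (P : MvPolynomial (Fin n) ℝ) : 0 ≤ fis n P P := by
  rw [fis_eq]
  exact Finset.sum_nonneg fun a _ => mul_nonneg (Nat.cast_nonneg _) (mul_self_nonneg _)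

open MvPolynomial in
lemma fis_X_mul {n : ℕ} (i : Fin n) (P Q : MvPolynomial (Fin n) ℝ) :
    fis n (X i * P) Q = fis n P (pderiv i Q) := by
  induction P using MvPolynomial.induction_on' with
  | add p q hp hq => rw [mul_add, map_add, map_add, LinearMap.add_apply, LinearMap.add_apply, hp, hq]
  | monomial u a =>
    have h1 : monomial u a = a • monomial u (1 : ℝ) := by
      rw [smul_monomial]; simp
    have h2 : (X i * monomial u 1 : MvPolynomial (Fin n) ℝ)
        = monomial (u + Finsupp.single i 1) 1 := by
      rw [X, monomial_mul, add_comm]; simp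
    rw [h1, mul_smul_comm, map_smul, map_smul, LinearMap.smul_apply, LinearMap.smul_apply, h2,
      fis_monomial, fis_monomial, coeff_pderiv]
    have h3 : (∏ j, ((u + Finsupp.single i 1 : Fin n →₀ ℕ) j).factorial) =
        (u i + 1) * ∏ j, (u j).factorial := by
      rw [← Finset.mul_prod_erase _ _ (Finset.mem_univ i),
        ← Finset.mul_prod_erase _ (fun j => (u j).factorial) (Finset.mem_univ i), ← mul_assoc]
      congr 1
      · simp [Nat.factorial_succ]
      · refine Finset.prod_congr rfl fun j hj => ?_
        rw [Finset.mem_erase] at hj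
        simp [Finsupp.single_apply, hj.1.symm]
    rw [h3]
    push_cast
    ring_nf

open MvPolynomial in
/-- linear form -/
noncomputable def linF {n : ℕ} (x : Fin n → ℝ) : MvPolynomial (Fin n) ℝ := ∑ i, C (x i) * X i

open MvPolynomial in
/-- squared radius -/
noncomputable def rad2 (n : ℕ) : MvPolynomial (Fin n) ℝ := ∑ i, X i * X i

open MvPolynomial in
/-- directional derivative -/
noncomputable def dirD {n : ℕ} (x : Fin n → ℝ) :
    Derivation ℝ (MvPolynomial (Fin n) ℝ) (MvPolynomial (Fin n) ℝ) := ∑ i, x i • pderiv i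

open MvPolynomial in
lemma dirD_apply {n : ℕ} (x : Fin n → ℝ) (P : MvPolynomial (Fin n) ℝ) :
    dirD x P = ∑ i, C (x i) * pderiv i P := by
  unfold dirD
  have : ∀ s : Finset (Fin n), (∑ i ∈ s, x i • pderiv i :
      Derivation ℝ (MvPolynomial (Fin n) ℝ) (MvPolynomial (Fin n) ℝ)) P
      = ∑ i ∈ s, C (x i) * pderiv i P := by
    intro s
    induction s using Finset.induction_on with
    | empty => simp
    | insert a s ha ih =>
      rw [Finset.sum_insert ha, Finset.sum_insert ha, Derivation.add_apply, ih,
        Derivation.smul_apply, smul_eq_C_mul]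
  exact this _

open MvPolynomial in
/-- Laplacian -/
noncomputable def lap {n : ℕ} (P : MvPolynomial (Fin n) ℝ) : MvPolynomial (Fin n) ℝ :=
  ∑ i, pderiv i (pderiv i P)

open MvPolynomial in
lemma pderiv_linF {n : ℕ} (x : Fin n → ℝ) (i : Fin n) : pderiv i (linF x) = C (x i) := by
  classical
  unfold linF
  rw [map_sum]
  simp [pderiv_C_mul, pderiv_X, Pi.single_apply]

open MvPolynomial in
lemma pderiv_rad2 {n : ℕ} (i : Fin n) : pderiv i (rad2 n) = 2 * X i := by
  classical
  unfold rad2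
  rw [map_sum]
  simp [pderiv_mul, pderiv_X, Pi.single_apply, Finset.sum_add_distrib]
  ring

open MvPolynomial in
lemma dirD_linF {n : ℕ} (x : Fin n → ℝ) (hx : ∑ i, x i * x i = 1) : dirD x (linF x) = 1 := by
  rw [dirD_apply]
  simp only [pderiv_linF, ← C_mul]
  rw [← map_sum, hx, C_1]

open MvPolynomial in
lemma dirD_rad2 {n : ℕ} (x : Fin n → ℝ) : dirD x (rad2 n) = 2 * linF x := by
  rw [dirD_apply, linF, Finset.mul_sum]
  refine Finset.sum_congr rfl fun i _ => ?_
  rw [pderiv_rad2]; ring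

open MvPolynomial in
lemma lap_linF_mul {n : ℕ} (x : Fin n → ℝ) (P : MvPolynomial (Fin n) ℝ) :
    lap (linF x * P) = linF x * lap P + 2 * dirD x P := by
  rw [dirD_apply, lap, lap, Finset.mul_sum, Finset.mul_sum, ← Finset.sum_add_distrib]
  refine Finset.sum_congr rfl fun i _ => ?_
  rw [pderiv_mul, map_add, pderiv_mul, pderiv_mul, pderiv_linF, pderiv_C]
  ring

open MvPolynomial in
lemma lap_rad2_mul {n k : ℕ} (P : MvPolynomial (Fin n) ℝ) (hP : P.IsHomogeneous k) :
    lap (rad2 n * P) = rad2 n * lap P + (2 * n + 4 * k) * P := by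
  have h : (4 * k : MvPolynomial (Fin n) ℝ) * P = 4 * ∑ i, X i * pderiv i P := by
    rw [hP.sum_X_mul_pderiv, nsmul_eq_mul]; ring
  have h2 : (2 * n : MvPolynomial (Fin n) ℝ) * P = ∑ i : Fin n, 2 * P := by
    simp; ring
  rw [add_mul, h, h2, lap, lap, Finset.mul_sum, Finset.mul_sum, ← Finset.sum_add_distrib,
    ← Finset.sum_add_distrib]
  refine Finset.sum_congr rfl fun i _ => ?_
  have h3 : pderiv i (2 * X i : MvPolynomial (Fin n) ℝ) = 2 := by
    have : (2 : MvPolynomial (Fin n) ℝ) = C 2 := (map_ofNat C 2).symm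
    rw [this, pderiv_C_mul, pderiv_X_self, mul_one]
  rw [pderiv_mul, map_add, pderiv_mul, pderiv_mul, pderiv_rad2, h3]
  ring

open MvPolynomial in
/-- zonal harmonic -/
noncomputable def zon {n : ℕ} (x : Fin n → ℝ) : ℕ → MvPolynomial (Fin n) ℝ
  | 0 => 1
  | 1 => linF x
  | (k + 2) => C (((k : ℝ) + n - 1)⁻¹) *
      (C (2 * (k : ℝ) + n) * (linF x * zon x (k + 1)) - C ((k : ℝ) + 1) * (rad2 n * zon x k))

lemma gam_pos {n : ℕ} (hn : 2 ≤ n) (k : ℕ) : (0 : ℝ) < (k : ℝ) + n - 1 := by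
  have : (2 : ℝ) ≤ n := by exact_mod_cast hn
  have : (0 : ℝ) ≤ k := Nat.cast_nonneg k
  linarith

open MvPolynomial in
lemma zon_rec {n : ℕ} (hn : 2 ≤ n) (x : Fin n → ℝ) (k : ℕ) :
    ((k : MvPolynomial (Fin n) ℝ) + n - 1) * zon x (k + 2) =
      (2 * k + n) * (linF x * zon x (k + 1)) - (k + 1) * (rad2 n * zon x k) := by
  have h : ((k : MvPolynomial (Fin n) ℝ) + n - 1) =
      (C ((k : ℝ) + n - 1) : MvPolynomial (Fin n) ℝ) := by simp
  rw [h, zon, ← mul_assoc, ← C_mul, mul_inv_cancel₀ (gam_pos hn k).ne']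
  simp only [map_add, map_mul, map_natCast, map_ofNat, map_one, one_mul]

open MvPolynomial in
lemma gam_ne {n : ℕ} (hn : 2 ≤ n) (k : ℕ) : ((k : MvPolynomial (Fin n) ℝ) + n - 1) ≠ 0 := by
  have h : ((k : MvPolynomial (Fin n) ℝ) + n - 1) =
      (C ((k : ℝ) + n - 1) : MvPolynomial (Fin n) ℝ) := by simp
  rw [h, Ne, C_eq_zero]
  exact (gam_pos hn k).ne'

open MvPolynomial in
lemma zon_hom {n : ℕ} (x : Fin n → ℝ) (k : ℕ) : (zon x k).IsHomogeneous k := by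
  have hl : (linF x).IsHomogeneous 1 :=
    IsHomogeneous.sum _ _ _ fun i _ => by
      simpa using (isHomogeneous_C (Fin n) (x i)).mul (isHomogeneous_X ℝ i)
  have hr : (rad2 n).IsHomogeneous 2 :=
    IsHomogeneous.sum _ _ _ fun i _ => (isHomogeneous_X ℝ i).mul (isHomogeneous_X ℝ i)
  induction k using Nat.twoStepInduction with
  | zero => exact isHomogeneous_one _ _
  | one => exact hl
  | more k h0 h1 =>
    rw [zon]
    refine IsHomogeneous.C_mul (IsHomogeneous.sub (IsHomogeneous.C_mul ?_ _)
      (IsHomogeneous.C_mul ?_ _)) _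
    · have := hl.mul h1
      rwa [show 1 + (k + 1) = k + 2 by ring] at this
    · have := hr.mul h0
      rwa [show 2 + k = k + 2 by ring] at this

open MvPolynomial in
lemma dirD_const_mul {n : ℕ} (x : Fin n → ℝ) (a : ℝ) (P : MvPolynomial (Fin n) ℝ) :
    dirD x (C a * P) = C a * dirD x P := by
  rw [C_mul', Derivation.map_smul, C_mul']

open MvPolynomial in
lemma dirD_rec {n : ℕ} (hn : 2 ≤ n) (x : Fin n → ℝ) (hx : ∑ i, x i * x i = 1) (k : ℕ) :
    ((k : MvPolynomial (Fin n) ℝ) + n - 1) * dirD x (zon x (k + 2)) =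
      (2 * k + n) * (zon x (k + 1) + linF x * dirD x (zon x (k + 1)))
       - (k + 1) * (2 * linF x * zon x k + rad2 n * dirD x (zon x k)) := by
  have h : ((k : MvPolynomial (Fin n) ℝ) + n - 1) =
      (C ((k : ℝ) + n - 1) : MvPolynomial (Fin n) ℝ) := by simp
  rw [h, ← dirD_const_mul, ← h, zon_rec hn]
  have h1 : (2 * k + n : MvPolynomial (Fin n) ℝ) = C (2 * (k : ℝ) + n) := by
    simp only [map_add, map_mul, map_natCast, map_ofNat]
  have h2 : (k + 1 : MvPolynomial (Fin n) ℝ) = C ((k : ℝ) + 1) := by simp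
  rw [h1, h2, map_sub, dirD_const_mul, dirD_const_mul, Derivation.leibniz, Derivation.leibniz,
    dirD_linF x hx, dirD_rad2]
  simp only [smul_eq_mul]
  ring

open MvPolynomial in
lemma dirD_zon {n : ℕ} (hn : 2 ≤ n) (x : Fin n → ℝ) (hx : ∑ i, x i * x i = 1) (k : ℕ) :
    dirD x (zon x (k + 1)) = ((k : MvPolynomial (Fin n) ℝ) + 1) * zon x k := by
  induction k using Nat.twoStepInduction with
  | zero => simp [zon, dirD_linF x hx]
  | one =>
    apply mul_left_cancel₀ (gam_ne hn 0)
    rw [dirD_rec hn x hx 0]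
    simp [zon, dirD_linF x hx]
    ring
  | more k h0 h1 =>
    apply mul_left_cancel₀ (gam_ne hn (k + 1))
    have h := zon_rec hn x k
    rw [show k + 2 + 1 = (k + 1) + 2 by ring, dirD_rec hn x hx (k + 1), h1, h0]
    push_cast
    linear_combination ((k : MvPolynomial (Fin n) ℝ) + 2) * (-1) * h

open MvPolynomial in
lemma lap_const_mul {n : ℕ} (a : ℝ) (P : MvPolynomial (Fin n) ℝ) :
    lap (C a * P) = C a * lap P := by
  simp only [lap, pderiv_C_mul, Finset.mul_sum]

open MvPolynomial in
lemma lap_sub {n : ℕ} (P Q : MvPolynomial (Fin n) ℝ) :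
    lap (P - Q) = lap P - lap Q := by
  simp only [lap, map_sub, Finset.sum_sub_distrib]

open MvPolynomial in
lemma lap_zon {n : ℕ} (hn : 2 ≤ n) (x : Fin n → ℝ) (hx : ∑ i, x i * x i = 1) (k : ℕ) :
    lap (zon x k) = 0 := by
  induction k using Nat.twoStepInduction with
  | zero => simp [zon, lap]
  | one => simp [zon, lap, pderiv_linF]
  | more k h0 h1 =>
    rw [zon, lap_const_mul, lap_sub, lap_const_mul, lap_const_mul, lap_linF_mul,
      lap_rad2_mul _ (zon_hom x k), h0, h1, dirD_zon hn x hx]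
    simp only [map_add, map_mul, map_natCast, map_ofNat, map_one]
    ring

open MvPolynomial in
lemma pderiv_comm' {n : ℕ} (i j : Fin n) (P : MvPolynomial (Fin n) ℝ) :
    pderiv i (pderiv j P) = pderiv j (pderiv i P) := by
  ext m
  simp only [coeff_pderiv]
  rcases eq_or_ne i j with rfl | h
  · rfl
  · simp [Finsupp.single_apply, h, h.symm, add_right_comm]
    ring

open MvPolynomial in
lemma lap_dirD {n : ℕ} (x : Fin n → ℝ) (P : MvPolynomial (Fin n) ℝ) :
    lap (dirD x P) = dirD x (lap P) := by
  simp only [lap, dirD_apply, map_sum, pderiv_C_mul, Finset.mul_sum]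
  refine Finset.sum_congr rfl fun j _ => Finset.sum_congr rfl fun i _ => ?_
  rw [pderiv_comm' j i, pderiv_comm' j i]

open MvPolynomial in
lemma fis_const_mul {n : ℕ} (a : ℝ) (P Q : MvPolynomial (Fin n) ℝ) :
    fis n (C a * P) Q = a * fis n P Q := by
  rw [C_mul', map_smul, LinearMap.smul_apply, smul_eq_mul]

open MvPolynomial in
lemma fis_linF_mul {n : ℕ} (x : Fin n → ℝ) (P Q : MvPolynomial (Fin n) ℝ) :
    fis n (linF x * P) Q = fis n P (dirD x Q) := by
  rw [linF, Finset.sum_mul, map_sum, LinearMap.sum_apply, dirD_apply, map_sum]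
  refine Finset.sum_congr rfl fun i _ => ?_
  rw [mul_assoc, fis_const_mul, fis_X_mul, C_mul', map_smul, smul_eq_mul]

open MvPolynomial in
lemma fis_rad2_mul {n : ℕ} (P Q : MvPolynomial (Fin n) ℝ) :
    fis n (rad2 n * P) Q = fis n P (lap Q) := by
  rw [rad2, Finset.sum_mul, map_sum, LinearMap.sum_apply, lap, map_sum]
  refine Finset.sum_congr rfl fun i _ => ?_
  rw [mul_assoc, fis_X_mul, fis_X_mul]

open MvPolynomial in
lemma dirD_hom {n k : ℕ} (x : Fin n → ℝ) (Q : MvPolynomial (Fin n) ℝ)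
    (h : Q.IsHomogeneous (k + 1)) : (dirD x Q).IsHomogeneous k := by
  rw [dirD_apply]
  exact IsHomogeneous.sum _ _ _ fun i _ => IsHomogeneous.C_mul h.pderiv _

open MvPolynomial in
lemma eval_dirD {n k : ℕ} (x : Fin n → ℝ) (Q : MvPolynomial (Fin n) ℝ)
    (h : Q.IsHomogeneous k) : eval x (dirD x Q) = k * eval x Q := by
  have := congrArg (eval x) h.sum_X_mul_pderiv
  rw [dirD_apply]
  simpa using this

open MvPolynomial in
lemma fis_one_hom {n : ℕ} (x : Fin n → ℝ) (Q : MvPolynomial (Fin n) ℝ)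
    (h : Q.IsHomogeneous 0) : fis n 1 Q = eval x Q := by
  rw [← totalDegree_zero_iff_isHomogeneous, totalDegree_eq_zero_iff_eq_C] at h
  have h1 := fis_monomial (n := n) 0 Q
  rw [h, eval_C, ← h, ← C_1, C_apply, h1]
  simp

open MvPolynomial in
lemma fis_zon {n : ℕ} (hn : 2 ≤ n) (k : ℕ) : ∃ A : ℝ, 0 < A ∧ ∀ (x : Fin n → ℝ)
    (Q : MvPolynomial (Fin n) ℝ), Q.IsHomogeneous k → lap Q = 0 →
      fis n (zon x k) Q = A * eval x Q := by
  induction k with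
  | zero => exact ⟨1, one_pos, fun x Q h _ => by rw [zon, fis_one_hom x Q h, one_mul]⟩
  | succ k ih =>
    obtain ⟨A, hA, ih⟩ := ih
    cases k with
    | zero =>
      refine ⟨A, hA, fun x Q h hl => ?_⟩
      have h1 := ih x (dirD x Q) (dirD_hom x Q h) (by rw [lap_dirD, hl, map_zero])
      rw [eval_dirD x Q h] at h1
      rw [zon, ← mul_one (linF x), fis_linF_mul]
      rw [zon] at h1
      rw [h1]; simp
    | succ k =>
      have hg := gam_pos hn k
      have ha : (0 : ℝ) < 2 * k + n := by
        have : (0 : ℝ) ≤ k := Nat.cast_nonneg k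
        linarith
      refine ⟨((k : ℝ) + n - 1)⁻¹ * ((2 * k + n) * (A * (k + 2))), by positivity,
        fun x Q h hl => ?_⟩
      have h1 := ih x (dirD x Q) (dirD_hom x Q h) (by rw [lap_dirD, hl, map_zero])
      rw [eval_dirD x Q h] at h1
      rw [zon, fis_const_mul, map_sub, LinearMap.sub_apply, fis_const_mul, fis_const_mul,
        fis_linF_mul, fis_rad2_mul, hl, h1]
      simp only [map_zero]
      push_cast
      ring

open MvPolynomial in
lemma eval_zon {n : ℕ} (x y : Fin n → ℝ) (hy : ∑ i, y i * y i = 1) (k : ℕ) :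
    eval y (zon x k) = Geg n k (∑ i, x i * y i) := by
  induction k using Nat.twoStepInduction with
  | zero => simp [zon, Geg]
  | one => simp [zon, Geg, linF]
  | more k h0 h1 =>
    have hl : eval y (linF x) = ∑ i, x i * y i := by simp [linF]
    have hr : eval y (rad2 n) = 1 := by simp [rad2, hy]
    rw [zon, Geg]
    simp only [map_mul, map_sub, eval_C, hl, hr, h0, h1]
    rw [div_eq_inv_mul]
    congr 1
    · congr 1; ring
    · ring

lemma geg_posdef {n m : ℕ} (hn : 2 ≤ n) (k : ℕ) (Y : Fin m → EuclideanSpace ℝ (Fin n))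
    (hY : ∀ i, ‖Y i‖ = 1) : 0 ≤ ∑ i, ∑ j, Geg n k ⟪Y i, Y j⟫ := by
  obtain ⟨A, hA, h⟩ := fis_zon hn k
  have hu : ∀ i, ∑ l, Y i l * Y i l = 1 := by
    intro i
    have := EuclideanSpace.real_norm_sq_eq (Y i)
    rw [hY i] at this
    simp only [← sq]
    linarith
  have key : ∀ i j, A * Geg n k ⟪Y i, Y j⟫ =
      fis n (zon (fun l => Y j l) k) (zon (fun l => Y i l) k) := by
    intro i j
    rw [h _ _ (zon_hom _ _) (lap_zon hn _ (hu i) k), eval_zon _ _ (hu j)]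
    congr 2
    rw [PiLp.inner_apply]
    simp [mul_comm]
  refine nonneg_of_mul_nonneg_right (b := _) ?_ hA
  have : A * ∑ i, ∑ j, Geg n k ⟪Y i, Y j⟫ =
      fis n (∑ j, zon (fun l => Y j l) k) (∑ i, zon (fun l => Y i l) k) := by
    simp only [Finset.mul_sum, key, map_sum, LinearMap.sum_apply]
  rw [this]
  exact fis_self_nonneg _

lemma kSmallestSum_nonpos (M : Multiset ℝ) (h : M.sum ≤ 0) (k : ℕ) : kSmallestSum M k ≤ 0 := by
  unfold kSmallestSum
  set l := M.sort (· ≤ ·) with hl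
  have hs : l.sum = M.sum := by
    rw [← Multiset.sum_coe, hl, Multiset.sort_eq]
  have hp : l.Pairwise (· ≤ ·) := Multiset.pairwise_sort _ _
  rw [← List.take_append_drop k l] at hp hs
  rw [List.pairwise_append] at hp
  by_contra! hc
  have : ∃ x ∈ l.take k, 0 < x := by
    by_contra! hn
    have := List.sum_le_card_nsmul (l.take k) 0 hn
    simp only [smul_zero] at this
    linarith
  obtain ⟨x, hx, hx0⟩ := this
  have hd : 0 ≤ (l.drop k).sum :=
    List.sum_nonneg fun y hy => hx0.le.trans (hp.2.2 x hx y hy)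
  rw [List.sum_append] at hs
  linarith

lemma kSmallestSum_zero (M : Multiset ℝ) (h : ∀ x ∈ M, x = 0) (k : ℕ) : kSmallestSum M k = 0 := by
  unfold kSmallestSum
  refine List.sum_eq_zero fun x hx => h x ?_
  exact (Multiset.mem_sort _).1 (List.mem_of_mem_take hx)

lemma sum_pairs_symm {m : ℕ} (g : Fin m → Fin m → ℝ) (hs : ∀ i j, g i j = g j i) :
    ∑ i, ∑ j, g i j = ∑ i, g i i +
      2 * ∑ q ∈ Finset.univ.filter (fun q : Fin m × Fin m => q.1 < q.2), g q.1 q.2 := by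
  have h1 : ∀ i j, g i j = (if i = j then g i j else 0) + (if i < j then g i j else 0)
      + (if j < i then g i j else 0) := by
    intro i j
    rcases lt_trichotomy i j with h | h | h
    · simp [h, h.ne, h.not_gt]
    · simp [h]
    · simp [h, h.ne', h.not_gt]
  have h2 : ∑ q ∈ Finset.univ.filter (fun q : Fin m × Fin m => q.1 < q.2), g q.1 q.2
      = ∑ i, ∑ j, if i < j then g i j else 0 := by
    rw [Finset.sum_filter, Fintype.sum_prod_type]
  have h3 : ∑ i, ∑ j, (if j < i then g i j else 0) = ∑ i, ∑ j, if i < j then g i j else 0 := by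
    rw [Finset.sum_comm]
    refine Finset.sum_congr rfl fun i _ => Finset.sum_congr rfl fun j _ => ?_
    rw [hs i j]
  have h4 : ∑ i, ∑ j, (if i = j then g i j else 0) = ∑ i, g i i := by simp
  rw [h2, ← h4]
  calc ∑ i, ∑ j, g i j = ∑ i, ∑ j, ((if i = j then g i j else 0) + (if i < j then g i j else 0)
      + (if j < i then g i j else 0)) :=
        Finset.sum_congr rfl fun i _ => Finset.sum_congr rfl fun j _ => h1 i j
    _ = _ := by
        simp only [Finset.sum_add_distrib]
        rw [h3]; ring

/-- An f-design P (f with nonnegative Gegenbauer coefficients) satisfies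
Σ_{i<j} (−f(⟨pᵢ,pⱼ⟩)) = 0, while every other m-point configuration Y of unit vectors has
Σ_{i<j} (−f(⟨yᵢ,yⱼ⟩)) ≤ 0; hence P is an M-set for ρ(x,y) = −f(⟨x,y⟩). -/
theorem f_design_is_MSet {n m d : ℕ} (hn : 2 ≤ n) (f : ℝ → ℝ) (c : ℕ → ℝ)
    (hc : ∀ k, 0 ≤ c k)
    (hf : ∀ t ∈ Set.Icc (-1 : ℝ) 1, f t = ∑ k ∈ Finset.range (d + 1), c k * Geg n k t)
    (p : Fin m → EuclideanSpace ℝ (Fin n)) (hp : ∀ i, ‖p i‖ = 1)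
    (hinj : Function.Injective p)
    (hz : ∀ i j, i ≠ j → f ⟪p i, p j⟫ = 0)
    (hdes : ∀ k, 1 ≤ k → k ≤ d → c k ≠ 0 → ∑ i, ∑ j, Geg n k ⟪p i, p j⟫ = 0) :
    (∑ q ∈ Finset.univ.filter (fun q : Fin m × Fin m => q.1 < q.2),
        (-(f ⟪p q.1, p q.2⟫)) = 0) ∧
    ∀ Y : Fin m → EuclideanSpace ℝ (Fin n), (∀ i, ‖Y i‖ = 1) →
      (∑ q ∈ Finset.univ.filter (fun q : Fin m × Fin m => q.1 < q.2),
          (-(f ⟪Y q.1, Y q.2⟫)) ≤ 0) ∧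
      WeakMaj (pairMultiset (fun x y => -(f ⟪x, y⟫)) p)
        (pairMultiset (fun x y => -(f ⟪x, y⟫)) Y) := by
  have mem : ∀ x y : EuclideanSpace ℝ (Fin n), ‖x‖ = 1 → ‖y‖ = 1 →
      ⟪x, y⟫ ∈ Set.Icc (-1 : ℝ) 1 := by
    intro x y hx hy
    have := abs_real_inner_le_norm x y
    rw [hx, hy, mul_one] at this
    exact abs_le.1 this
  have expand : ∀ Y : Fin m → EuclideanSpace ℝ (Fin n), (∀ i, ‖Y i‖ = 1) →
      ∑ i, ∑ j, f ⟪Y i, Y j⟫ =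
        c 0 * (m * m) + ∑ k ∈ Finset.range d, c (k + 1) * ∑ i, ∑ j, Geg n (k + 1) ⟪Y i, Y j⟫ := by
    intro Y hY
    have h1 : ∑ i, ∑ j, f ⟪Y i, Y j⟫ =
        ∑ k ∈ Finset.range (d + 1), c k * ∑ i, ∑ j, Geg n k ⟪Y i, Y j⟫ := by
      calc ∑ i, ∑ j, f ⟪Y i, Y j⟫
          = ∑ i, ∑ j, ∑ k ∈ Finset.range (d + 1), c k * Geg n k ⟪Y i, Y j⟫ :=
            Finset.sum_congr rfl fun i _ => Finset.sum_congr rfl fun j _ =>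
              hf _ (mem _ _ (hY i) (hY j))
        _ = ∑ i, ∑ k ∈ Finset.range (d + 1), ∑ j, c k * Geg n k ⟪Y i, Y j⟫ :=
            Finset.sum_congr rfl fun i _ => Finset.sum_comm
        _ = _ := by
            rw [Finset.sum_comm]
            simp only [Finset.mul_sum]
    rw [h1, Finset.sum_range_succ', add_comm]
    congr 1
    simp [Geg]
  have diag : ∀ Y : Fin m → EuclideanSpace ℝ (Fin n), (∀ i, ‖Y i‖ = 1) →
      ∑ i, f ⟪Y i, Y i⟫ = m * f 1 := by
    intro Y hY
    simp [real_inner_self_eq_norm_sq, hY]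
  have p0 : ∑ q ∈ Finset.univ.filter (fun q : Fin m × Fin m => q.1 < q.2),
        f ⟪p q.1, p q.2⟫ = 0 :=
    Finset.sum_eq_zero fun q hq => hz _ _ (Finset.mem_filter.1 hq).2.ne
  have hP := sum_pairs_symm (fun i j => f ⟪p i, p j⟫) (fun i j => by rw [real_inner_comm])
  have hPz : ∑ k ∈ Finset.range d, c (k + 1) * ∑ i, ∑ j, Geg n (k + 1) ⟪p i, p j⟫ = 0 := by
    refine Finset.sum_eq_zero fun k hk => ?_
    rw [Finset.mem_range] at hk
    by_cases h : c (k + 1) = 0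
    · rw [h, zero_mul]
    · rw [hdes (k + 1) (by omega) (by omega) h, mul_zero]
  rw [expand p hp, diag p hp, p0, hPz] at hP
  refine ⟨by rw [Finset.sum_neg_distrib, p0, neg_zero], fun Y hY => ?_⟩
  have hYs := sum_pairs_symm (fun i j => f ⟪Y i, Y j⟫) (fun i j => by rw [real_inner_comm])
  rw [expand Y hY, diag Y hY] at hYs
  have hYn : 0 ≤ ∑ k ∈ Finset.range d, c (k + 1) * ∑ i, ∑ j, Geg n (k + 1) ⟪Y i, Y j⟫ :=
    Finset.sum_nonneg fun k _ => mul_nonneg (hc _) (geg_posdef hn _ Y hY)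
  have main : ∑ q ∈ Finset.univ.filter (fun q : Fin m × Fin m => q.1 < q.2),
          (-(f ⟪Y q.1, Y q.2⟫)) ≤ 0 := by
    rw [Finset.sum_neg_distrib]
    linarith
  refine ⟨main, fun k => ?_⟩
  rw [kSmallestSum_zero (pairMultiset (fun x y => -(f ⟪x, y⟫)) p)]
  · exact kSmallestSum_nonpos _ main k
  · intro x hx
    obtain ⟨q, hq, rfl⟩ := Multiset.mem_map.1 hx
    have hq' := (Finset.mem_filter.1 hq).2
    simp [hz _ _ hq'.ne]
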